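/- arXiv:math/0202173 — 2 statements merged into one kernel-verified Lean document; each statement's English description precedes it below -/
import Mathlib

section
/- In the polynomial ring ℂ[x0,x1,x2,x3], let K = x0²x1 + x0x1x2 + x0x2² + x2³ + x0x1x3 and F = x0⁵ + x1x2⁴ + x2x1⁴ + x3⁵ + x1²x2³ + x0x3·K. Let I be the ideal generated by x0·∂F/∂x0, ∂F/∂x1, ∂F/∂x2, x3·∂F/∂x3, and let J be the ideal generated by x2³x0x3K, x1x2²x0x3K, x1²x2x0x3K, x0²x3K, x0x3²K, x1²x2³x0, x1²x2³x3. Then every homogeneous polynomial of total degree at most 8 lying in I ∩ J is zero. -/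
open MvPolynomial

/-!
Multiplication by a power of `x0` reduces the claim to degree 8. There `I` is spanned by the
monomial multiples of its four generators, and `x2⁴ · ∂F/∂x2` may be left out: since
`∂F/∂x1 = x2⁴ + ⋯`, the two ways of expanding `∂F/∂x1 · ∂F/∂x2` express it through the other
multiples. Likewise `J` is spanned by certain monomial multiples of `x0x3K` and `x1²x2³`.
These `109 + 35` polynomials have integer coefficients and are linearly independent modulo 2, even
after the substitution `x0, x1, x2, x3 ↦ t, t⁹, t⁸¹, 1`, by Gaussian elimination on binary
numbers. So they are independent over every torsion-free coefficient ring, and the two spans meet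
only in `0`.
-/

theorem linearIndepOn_insert_of_map_eq_zero {ι k V W : Type*} [DivisionRing k] [AddCommGroup V]
    [Module k V] [AddCommGroup W] [Module k W] (f : V →ₗ[k] W) {v : ι → V} {s : Set ι} {a : ι}
    (hs : LinearIndepOn k (f ∘ v) s) (ha : v a ≠ 0) (hfa : f (v a) = 0) :
    LinearIndepOn k v (insert a s) := by
  have hdisj : Disjoint (Submodule.span k (v '' s)) (LinearMap.ker f) := by
    have := Submodule.range_ker_disjoint hs
    rwa [← Set.image_eq_range] at this
  exact (LinearIndepOn.of_comp f hs).insert fun hmem =>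
    ha (Submodule.disjoint_def.1 hdisj _ hmem hfa)

theorem linearIndependent_map_of_flat {ι σ A R : Type*} [CommRing A] [CommRing R] [Algebra A R]
    [Module.Flat A R] {v : ι → MvPolynomial σ A} (h : LinearIndependent A v) :
    LinearIndependent R fun i => map (algebraMap A R) (v i) := by
  have hinj := Module.Flat.lTensor_preserves_injective_linearMap (M := R)
    (Finsupp.linearCombination A v) h
  classical
  have hfac : ∀ c, Finsupp.linearCombination R (fun i => map (algebraMap A R) (v i)) c =
      algebraTensorAlgEquiv A R ((Finsupp.linearCombination A v).lTensor R
        ((TensorProduct.finsuppScalarRight A R R ι).symm c)) := by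
    intro c
    induction c using Finsupp.induction_linear with
    | zero => simp
    | add c d hc hd => simp only [map_add, hc, hd]
    | single i z => simp [algebraTensorAlgEquiv_tmul]
  intro c d hcd
  rw [hfac, hfac] at hcd
  exact (TensorProduct.finsuppScalarRight A R R ι).symm.injective
    (hinj ((algebraTensorAlgEquiv A R).injective hcd))

theorem homogeneousComponent_mul_mem {σ R : Type*} [CommSemiring R]
    {W : Submodule R (MvPolynomial σ R)} {g : MvPolynomial σ R} {k n : ℕ} (hg : g.IsHomogeneous k)
    (hW : ∀ s : σ →₀ ℕ, s.degree + k = n → monomial s 1 * g ∈ W) (p : MvPolynomial σ R) :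
    homogeneousComponent n (p * g) ∈ W := by
  induction p using MvPolynomial.induction_on' with
  | add p q hp hq => rw [add_mul, map_add]; exact W.add_mem hp hq
  | monomial s z =>
    have hz : monomial s z = z • monomial s (1 : R) := by rw [smul_monomial, smul_eq_mul, mul_one]
    rw [hz, smul_mul_assoc, map_smul,
      homogeneousComponent_of_mem ((isHomogeneous_monomial (1 : R) rfl).mul hg)]
    split_ifs with hs
    · exact W.smul_mem z (hW s hs.symm)
    · rw [smul_zero]; exact W.zero_mem

theorem homogeneousComponent_mem_of_mem_span {σ R : Type*} [CommSemiring R]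
    {S : Set (MvPolynomial σ R)} {W : Submodule R (MvPolynomial σ R)} {n : ℕ}
    (hS : ∀ g ∈ S, ∃ k, g.IsHomogeneous k ∧
      ∀ s : σ →₀ ℕ, s.degree + k = n → monomial s 1 * g ∈ W)
    {f : MvPolynomial σ R} (hf : f ∈ Ideal.span S) : homogeneousComponent n f ∈ W := by
  obtain ⟨c, t, ht, -, rfl⟩ := Submodule.mem_span_iff_exists_finset_subset.1 hf
  rw [map_sum]
  refine W.sum_mem fun g hg => ?_
  obtain ⟨k, hk, hW⟩ := hS g (ht hg)
  exact homogeneousComponent_mul_mem hk hW (c g)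

/-- The polynomial over `𝔽₂` whose coefficients are the binary digits of `n`. -/
noncomputable def binaryPolynomial (n : ℕ) : Polynomial (ZMod 2) :=
  ∑ i ∈ Finset.range n with n.testBit i, Polynomial.X ^ i

theorem coeff_binaryPolynomial (n i : ℕ) :
    (binaryPolynomial n).coeff i = if n.testBit i then 1 else 0 := by
  have hi : n.testBit i → i < n := fun h =>
    Nat.lt_two_pow_self.trans_le (Nat.ge_two_pow_of_testBit h)
  simp only [binaryPolynomial, Polynomial.finsetSum_coeff, Polynomial.coeff_X_pow,
    Finset.sum_ite_eq, Finset.mem_filter, Finset.mem_range, and_iff_right_of_imp hi]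

@[simp] theorem binaryPolynomial_zero : binaryPolynomial 0 = 0 := by simp [binaryPolynomial]

theorem binaryPolynomial_ne_zero {n : ℕ} (hn : n ≠ 0) : binaryPolynomial n ≠ 0 := by
  intro h
  have := coeff_binaryPolynomial n n.log2
  simp [h, Nat.testBit_log2 hn] at this

theorem binaryPolynomial_xor (m n : ℕ) :
    binaryPolynomial (m ^^^ n) = binaryPolynomial m + binaryPolynomial n := by
  ext i
  simp only [Polynomial.coeff_add, coeff_binaryPolynomial, Nat.testBit_xor]
  cases m.testBit i <;> cases n.testBit i <;> decide

theorem binaryPolynomial_two_pow (k : ℕ) : binaryPolynomial (2 ^ k) = Polynomial.X ^ k := by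
  ext i
  simp [coeff_binaryPolynomial, Nat.testBit_two_pow, Polynomial.coeff_X_pow, eq_comm]

theorem binaryPolynomial_one : binaryPolynomial 1 = 1 := by simpa using binaryPolynomial_two_pow 0

theorem binaryPolynomial_shiftLeft (n k : ℕ) :
    binaryPolynomial (n <<< k) = Polynomial.X ^ k * binaryPolynomial n := by
  ext i
  simp only [coeff_binaryPolynomial, Nat.testBit_shiftLeft, Polynomial.coeff_X_pow_mul']
  grind

theorem xor_lt_iff_testBit_log2 {v w : ℕ} (hv : v ≠ 0) :
    w ^^^ v < w ↔ w.testBit v.log2 := by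
  have hlead : v.testBit v.log2 := Nat.testBit_log2 hv
  have hhigh : ∀ j, v.log2 < j → v.testBit j = false := fun j hj =>
    Nat.testBit_lt_two_pow ((Nat.log2_lt hv).1 hj)
  constructor
  · intro hlt
    by_contra hw
    refine hlt.not_ge (Nat.lt_of_testBit v.log2 ?_ ?_ fun j hj => ?_).le
    · simpa using hw
    · simpa [hlead] using hw
    · simp [hhigh j hj]
  · intro hw
    refine Nat.lt_of_testBit v.log2 ?_ hw fun j hj => ?_
    · simp [hlead, hw]
    · simp [hhigh j hj]

/-- One step of Gaussian elimination on rows over `𝔽₂` encoded as binary numbers: taking the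
minimum adds `v` to `w` exactly if this clears the digit of `w` at the leading position of `v`. -/
def xorEliminate (v w : ℕ) : ℕ := min w (w ^^^ v)

/-- The linear map that `xorEliminate v` computes on binary digits. -/
noncomputable def xorEliminateHom (v : ℕ) : Polynomial (ZMod 2) →ₗ[ZMod 2] Polynomial (ZMod 2) :=
  LinearMap.id - (Polynomial.lcoeff (ZMod 2) v.log2).smulRight (binaryPolynomial v)

theorem xorEliminateHom_binaryPolynomial {v : ℕ} (hv : v ≠ 0) (w : ℕ) :
    xorEliminateHom v (binaryPolynomial w) = binaryPolynomial (xorEliminate v w) := by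
  by_cases h : w.testBit v.log2
  · have hmin : xorEliminate v w = w ^^^ v := min_eq_right ((xor_lt_iff_testBit_log2 hv).2 h).le
    simp [xorEliminateHom, hmin, h, coeff_binaryPolynomial, binaryPolynomial_xor,
      CharTwo.sub_eq_add]
  · have hmin : xorEliminate v w = w :=
      min_eq_left (not_lt.1 (mt (xor_lt_iff_testBit_log2 hv).1 h))
    simp [xorEliminateHom, hmin, h, coeff_binaryPolynomial]

/-- The independence test by Gaussian elimination for rows over `𝔽₂` encoded as binary numbers;
`r` reduces a row modulo the pivots found so far. -/
def xorIndependent (r : ℕ → ℕ) : List ℕ → Bool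
  | [] => true
  | w :: ws =>
    -- Matching on `r w` makes the kernel evaluate the new pivot before it enters the closure `r`.
    match r w with
    | 0 => false
    | v + 1 => xorIndependent (xorEliminate (v + 1) ∘ r) ws

theorem linearIndepOn_of_xorIndependent {ι : Type*} {code : ι → ℕ} {r : ℕ → ℕ}
    {f : Polynomial (ZMod 2) →ₗ[ZMod 2] Polynomial (ZMod 2)}
    (hf : ∀ n, f (binaryPolynomial n) = binaryPolynomial (r n)) {l : List ι}
    (h : xorIndependent r (l.map code) = true) :
    LinearIndepOn (ZMod 2) (f ∘ binaryPolynomial ∘ code) {a | a ∈ l} := by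
  induction l generalizing r f with
  | nil => simp
  | cons a l ih =>
    rw [List.map_cons, xorIndependent] at h
    cases hv : r (code a) with
    | zero => simp [hv] at h
    | succ v =>
      simp only [hv] at h
      have hfa : (f ∘ binaryPolynomial ∘ code) a = binaryPolynomial (v + 1) := by
        rw [Function.comp_apply, Function.comp_apply, hf, hv]
      have hcomp : ∀ n, (xorEliminateHom (v + 1) ∘ₗ f) (binaryPolynomial n) =
          binaryPolynomial ((xorEliminate (v + 1) ∘ r) n) := fun n => by
        rw [LinearMap.comp_apply, hf, xorEliminateHom_binaryPolynomial v.succ_ne_zero,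
          Function.comp_apply]
      have htail := ih hcomp h
      rw [LinearMap.coe_comp, Function.comp_assoc] at htail
      have hcons : {b | b ∈ a :: l} = insert a {b | b ∈ l} := by ext; simp
      rw [hcons]
      refine linearIndepOn_insert_of_map_eq_zero (xorEliminateHom (v + 1)) htail ?_ ?_
      · rw [hfa]
        exact binaryPolynomial_ne_zero v.succ_ne_zero
      · rw [hfa, xorEliminateHom_binaryPolynomial v.succ_ne_zero, xorEliminate, Nat.xor_self,
          Nat.min_zero, binaryPolynomial_zero]

theorem linearIndependent_int_of_zmod {ι M V : Type*} [AddCommGroup M] [IsAddTorsionFree M]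
    [AddCommGroup V] {p : ℕ} (hp : p ≠ 1) [Module (ZMod p) V] (φ : M →+ V) {v : ι → M}
    (h : LinearIndependent (ZMod p) (φ ∘ v)) : LinearIndependent ℤ v := by
  rw [linearIndependent_iff'] at h ⊢
  intro s c hc i hi
  obtain ⟨d, hcd, hd⟩ := s.extract_gcd c ⟨i, hi⟩
  by_contra hci
  have hgcd : s.gcd c ≠ 0 := fun h0 => hci (by rw [hcd i hi, h0, zero_mul])
  have hsum : ∑ j ∈ s, d j • v j = 0 := by
    refine (smul_eq_zero.1 ?_).resolve_left hgcd
    rw [Finset.smul_sum, ← hc]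
    exact Finset.sum_congr rfl fun j hj => by rw [smul_smul, hcd j hj]
  have hdvd : ∀ j ∈ s, (p : ℤ) ∣ d j := by
    intro j hj
    rw [← ZMod.intCast_zmod_eq_zero_iff_dvd]
    refine h s (fun j => (d j : ZMod p)) ?_ j hj
    simpa [Int.cast_smul_eq_zsmul] using congrArg φ hsum
  have : (p : ℤ) ∣ 1 := hd ▸ Finset.dvd_gcd hdvd
  exact hp (by exact_mod_cast Int.eq_one_of_dvd_one (by positivity) this)

namespace QuinticSurface

open List.Nat (antidiagonalTuple)

variable (R : Type*) [CommRing R]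

/-- The cubic `K`. -/
noncomputable def cubic : MvPolynomial (Fin 4) R :=
  X 0 ^ 2 * X 1 + X 0 * X 1 * X 2 + X 0 * X 2 ^ 2 + X 2 ^ 3 + X 0 * X 1 * X 3

/-- The quintic `F`. -/
noncomputable def quintic : MvPolynomial (Fin 4) R :=
  X 0 ^ 5 + X 1 * X 2 ^ 4 + X 2 * X 1 ^ 4 + X 3 ^ 5 + X 1 ^ 2 * X 2 ^ 3 + X 0 * X 3 * cubic R

/-- The four generators of `I`, followed by the two polynomials `x0x3K` and `x1²x2³` of which all
generators of `J` are monomial multiples. -/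
noncomputable def generator : Fin 6 → MvPolynomial (Fin 4) R :=
  ![X 0 * pderiv 0 (quintic R), pderiv 1 (quintic R), pderiv 2 (quintic R),
    X 3 * pderiv 3 (quintic R), X 0 * X 3 * cubic R, X 1 ^ 2 * X 2 ^ 3]

theorem generator_eq (i : Fin 6) : generator R i =
    ![5 * X 0 ^ 5 + 2 * X 0 ^ 3 * X 1 * X 3 + X 0 * X 3 * cubic R +
        X 0 ^ 2 * X 3 * (X 1 * X 2 + X 2 ^ 2 + X 1 * X 3),
      X 2 ^ 4 + 4 * X 1 ^ 3 * X 2 + 2 * X 1 * X 2 ^ 3 + X 0 ^ 3 * X 3 + X 0 ^ 2 * X 2 * X 3 +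
        X 0 ^ 2 * X 3 ^ 2,
      X 1 ^ 4 + 4 * X 1 * X 2 ^ 3 + 3 * X 1 ^ 2 * X 2 ^ 2 + X 0 ^ 2 * X 1 * X 3 +
        2 * X 0 ^ 2 * X 2 * X 3 + 3 * X 0 * X 2 ^ 2 * X 3,
      5 * X 3 ^ 5 + X 0 * X 3 * cubic R + X 0 ^ 2 * X 1 * X 3 ^ 2,
      X 0 * X 3 * cubic R,
      X 1 ^ 2 * X 2 ^ 3] i := by
  fin_cases i <;> simp [generator, quintic, cubic, pderiv_X] <;> ring

/-- The monomial multiple `x^e · generator R i`, indexed by the pair `(i, e)`. -/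
noncomputable def multiple (a : Fin 6 × (Fin 4 → ℕ)) : MvPolynomial (Fin 4) R :=
  monomial (Finsupp.equivFunOnFinite.symm a.2) 1 * generator R a.1

theorem isHomogeneous_cubic : (cubic R).IsHomogeneous 3 := by
  unfold cubic
  have hX := isHomogeneous_X R (σ := Fin 4)
  exact ((hX 0).pow 2).mul (hX 1) |>.add (((hX 0).mul (hX 1)).mul (hX 2))
    |>.add ((hX 0).mul ((hX 2).pow 2)) |>.add ((hX 2).pow 3)
    |>.add (((hX 0).mul (hX 1)).mul (hX 3))

theorem isHomogeneous_quintic : (quintic R).IsHomogeneous 5 := by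
  unfold quintic
  have hX := isHomogeneous_X R (σ := Fin 4)
  exact (hX 0).pow 5 |>.add ((hX 1).mul ((hX 2).pow 4)) |>.add ((hX 2).mul ((hX 1).pow 4))
    |>.add ((hX 3).pow 5) |>.add (((hX 1).pow 2).mul ((hX 2).pow 3))
    |>.add (((hX 0).mul (hX 3)).mul (isHomogeneous_cubic R))

/-- The degrees of the polynomials `generator R i`. -/
def generatorDegree : Fin 6 → ℕ := ![5, 4, 4, 5, 5, 5]

theorem isHomogeneous_generator (i : Fin 6) :
    (generator R i).IsHomogeneous (generatorDegree i) := by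
  have hX := isHomogeneous_X R (σ := Fin 4)
  have hF := isHomogeneous_quintic R
  fin_cases i
  · exact (hX 0).mul hF.pderiv
  · exact hF.pderiv
  · exact hF.pderiv
  · exact (hX 3).mul hF.pderiv
  · exact ((hX 0).mul (hX 3)).mul (isHomogeneous_cubic R)
  · exact ((hX 1).pow 2).mul ((hX 2).pow 3)

theorem map_multiple (a : Fin 6 × (Fin 4 → ℕ)) :
    map (algebraMap ℤ R) (multiple ℤ a) = multiple R a := by
  have hK : map (algebraMap ℤ R) (cubic ℤ) = cubic R := by simp [cubic]
  have hF : map (algebraMap ℤ R) (quintic ℤ) = quintic R := by simp [quintic, cubic]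
  have hgen : ∀ i, map (algebraMap ℤ R) (generator ℤ i) = generator R i := by
    intro i
    fin_cases i <;> simp [generator, ← hK, ← hF, pderiv_map]
  rw [multiple, multiple, map_mul, map_monomial, map_one, hgen]

/-- Reduction modulo 2 with the substitution `x0, x1, x2, x3 ↦ t, t⁹, t⁸¹, 1`, which packs the
exponents of a monomial of degree 8 into one base 9 number. -/
noncomputable def kroneckerModTwo : MvPolynomial (Fin 4) ℤ →+* Polynomial (ZMod 2) :=
  eval₂Hom (Int.castRingHom _) ![Polynomial.X, Polynomial.X ^ 9, Polynomial.X ^ 81, 1]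

/-- The images of `generator ℤ i` under `kroneckerModTwo`, as binary numbers. -/
def generatorBits : Fin 6 → ℕ :=
  ![2 ^ 5 ^^^ 2 ^ 12 ^^^ 2 ^ 244,
    2 ^ 324 ^^^ 2 ^ 3 ^^^ 2 ^ 83 ^^^ 2 ^ 2,
    2 ^ 36 ^^^ 2 ^ 180 ^^^ 2 ^ 11 ^^^ 2 ^ 163,
    1 ^^^ 2 ^ 12 ^^^ 2 ^ 92 ^^^ 2 ^ 164 ^^^ 2 ^ 244,
    2 ^ 12 ^^^ 2 ^ 92 ^^^ 2 ^ 164 ^^^ 2 ^ 244 ^^^ 2 ^ 11,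
    2 ^ 261]

/-- The images of `multiple ℤ a` under `kroneckerModTwo`, as binary numbers. -/
def multipleBits (a : Fin 6 × (Fin 4 → ℕ)) : ℕ :=
  generatorBits a.1 <<< (a.2 0 + 9 * a.2 1 + 81 * a.2 2)

theorem kroneckerModTwo_generator (i : Fin 6) :
    kroneckerModTwo (generator ℤ i) = binaryPolynomial (generatorBits i) := by
  rw [generator_eq]
  fin_cases i <;>
    simp [kroneckerModTwo, generatorBits, cubic, binaryPolynomial_xor, binaryPolynomial_one,
      binaryPolynomial_two_pow, CharTwo.two_eq_zero, -Nat.reducePow] <;> grind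

theorem kroneckerModTwo_multiple (a : Fin 6 × (Fin 4 → ℕ)) :
    kroneckerModTwo (multiple ℤ a) = binaryPolynomial (multipleBits a) := by
  rw [multiple, multipleBits, binaryPolynomial_shiftLeft, map_mul, kroneckerModTwo_generator]
  congr 1
  simp [kroneckerModTwo, Finsupp.prod_fintype, Fin.prod_univ_four, pow_add, pow_mul]

/-- Indices of monomial multiples that span the degree 8 part of `I`; the redundant multiple
`x2⁴ · ∂F/∂x2` is left out to make them independent. -/
def jacobianIndices : List (Fin 6 × (Fin 4 → ℕ)) :=
  (antidiagonalTuple 4 3).map (Prod.mk 0) ++ (antidiagonalTuple 4 4).map (Prod.mk 1) ++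
    ((antidiagonalTuple 4 4).filter (· ≠ ![0, 0, 4, 0])).map (Prod.mk 2) ++
    (antidiagonalTuple 4 3).map (Prod.mk 3)

/-- Indices of monomial multiples that span the degree 8 part of `J`. -/
def liftingIndices : List (Fin 6 × (Fin 4 → ℕ)) :=
  ((antidiagonalTuple 4 3).filter fun e => 0 < e 0 + e 2 + e 3).map (Prod.mk 4) ++
    ((antidiagonalTuple 4 3).filter fun e => 0 < e 0 + e 3).map (Prod.mk 5)

theorem xorIndependent_multipleBits :
    xorIndependent id ((jacobianIndices ++ liftingIndices).map multipleBits) = true := by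
  decide +kernel

theorem disjoint_indices :
    Disjoint {a | a ∈ jacobianIndices} {a | a ∈ liftingIndices} := by
  rw [Set.disjoint_left]
  rintro a ha hb
  simp only [jacobianIndices, liftingIndices, Set.mem_ofPred_eq, List.mem_append,
    List.mem_map] at ha hb
  rcases ha with (((⟨e, -, rfl⟩ | ⟨e, -, rfl⟩) | ⟨e, -, rfl⟩) | ⟨e, -, rfl⟩) <;> simp at hb

theorem linearIndepOn_multiple_int :
    LinearIndepOn ℤ (multiple ℤ) {a | a ∈ jacobianIndices ++ liftingIndices} := by
  have h := linearIndepOn_of_xorIndependent (f := LinearMap.id) (fun _ => rfl)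
    xorIndependent_multipleBits
  refine linearIndependent_int_of_zmod (p := 2) (by decide) kroneckerModTwo.toAddMonoidHom ?_
  have hcode : kroneckerModTwo ∘ multiple ℤ = binaryPolynomial ∘ multipleBits :=
    funext kroneckerModTwo_multiple
  rw [LinearMap.id_coe, Function.id_comp, ← hcode] at h
  exact h

theorem linearIndepOn_multiple [IsAddTorsionFree R] :
    LinearIndepOn R (multiple R) {a | a ∈ jacobianIndices ++ liftingIndices} := by
  have h := linearIndependent_map_of_flat (R := R) linearIndepOn_multiple_int
  simp only [map_multiple] at h
  exact h

/-- The degree 8 part of `I`. -/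
noncomputable def jacobianSpan : Submodule R (MvPolynomial (Fin 4) R) :=
  Submodule.span R (multiple R '' {a | a ∈ jacobianIndices})

/-- The degree 8 part of `J`. -/
noncomputable def liftingSpan : Submodule R (MvPolynomial (Fin 4) R) :=
  Submodule.span R (multiple R '' {a | a ∈ liftingIndices})

theorem disjoint_jacobianSpan_liftingSpan [IsAddTorsionFree R] :
    Disjoint (jacobianSpan R) (liftingSpan R) := by
  have h := linearIndepOn_multiple R
  have hunion : {a | a ∈ jacobianIndices ++ liftingIndices} =
    {a | a ∈ jacobianIndices} ∪ {a | a ∈ liftingIndices} := by ext; simp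
  rw [hunion] at h
  exact ((linearIndepOn_union_iff disjoint_indices).1 h).2.2

variable {R} in
theorem monomial_mul_generator_mem_span {L : List (Fin 6 × (Fin 4 → ℕ))} {i : Fin 6}
    {s : Fin 4 →₀ ℕ} (h : (i, ⇑s) ∈ L) :
    monomial s 1 * generator R i ∈ Submodule.span R (multiple R '' {a | a ∈ L}) := by
  refine Submodule.subset_span ⟨(i, ⇑s), h, ?_⟩
  rw [multiple, Finsupp.equivFunOnFinite_symm_coe]

theorem coe_mem_antidiagonalTuple {k n : ℕ} {s : Fin k →₀ ℕ} :
    ⇑s ∈ antidiagonalTuple k n ↔ s.degree = n := by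
  rw [List.Nat.mem_antidiagonalTuple, Finsupp.degree_eq_sum]

theorem mem_jacobianIndices {i : Fin 6} (hi : i < 4) {s : Fin 4 →₀ ℕ}
    (hs : s.degree + generatorDegree i = 8) (h : i = 2 → ⇑s ≠ ![0, 0, 4, 0]) :
    (i, ⇑s) ∈ jacobianIndices := by
  fin_cases i <;> simp_all [jacobianIndices, generatorDegree, coe_mem_antidiagonalTuple]

theorem multiple_eq (a : Fin 6 × (Fin 4 → ℕ)) : multiple R a =
    X 0 ^ a.2 0 * X 1 ^ a.2 1 * X 2 ^ a.2 2 * X 3 ^ a.2 3 * generator R a.1 := by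
  rw [multiple, monomial_eq, map_one, one_mul, Finsupp.prod_fintype _ _ fun _ => pow_zero _,
    Fin.prod_univ_four]
  rfl

theorem multiple_two_mem_jacobianSpan : multiple R (2, ![0, 0, 4, 0]) ∈ jacobianSpan R := by
  have hmem {e : Fin 4 → ℕ} (he : (2, e) ∈ jacobianIndices) :
      multiple R (2, e) ∈ jacobianSpan R := Submodule.subset_span ⟨_, he, rfl⟩
  have hcross : generator R 2 * generator R 1 ∈ jacobianSpan R := by
    have hdeg : 8 = generatorDegree 2 + generatorDegree 1 := rfl
    have h := homogeneousComponent_mul_mem (isHomogeneous_generator R 1)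
      (fun s hs => monomial_mul_generator_mem_span
        (mem_jacobianIndices (by decide) hs fun h => absurd h (by decide))) (generator R 2)
    rwa [homogeneousComponent_of_mem
      ((isHomogeneous_generator R 2).mul (isHomogeneous_generator R 1)), if_pos hdeg] at h
  have hkoszul : multiple R (2, ![0, 0, 4, 0]) = generator R 2 * generator R 1 -
      ((4 : R) • multiple R (2, ![0, 3, 1, 0]) + (2 : R) • multiple R (2, ![0, 1, 3, 0]) +
        multiple R (2, ![3, 0, 0, 1]) + multiple R (2, ![2, 0, 1, 1]) +
        multiple R (2, ![2, 0, 0, 2])) := by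
    simp only [multiple_eq, generator_eq R 1, smul_eq_C_mul, map_ofNat, Matrix.cons_val]
    ring
  rw [hkoszul]
  refine Submodule.sub_mem _ hcross (add_mem (add_mem (add_mem (add_mem
    (Submodule.smul_mem _ _ (hmem ?_)) (Submodule.smul_mem _ _ (hmem ?_))) (hmem ?_)) (hmem ?_))
    (hmem ?_))
  all_goals decide +kernel

variable {R} in
theorem monomial_mul_generator_mem_jacobianSpan {i : Fin 6} (hi : i < 4) {s : Fin 4 →₀ ℕ}
    (hs : s.degree + generatorDegree i = 8) :
    monomial s 1 * generator R i ∈ jacobianSpan R := by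
  by_cases h : i = 2 ∧ ⇑s = ![0, 0, 4, 0]
  · obtain ⟨rfl, hs'⟩ := h
    have := multiple_two_mem_jacobianSpan R
    rwa [← hs', multiple, Finsupp.equivFunOnFinite_symm_coe] at this
  · exact monomial_mul_generator_mem_span (mem_jacobianIndices hi hs (not_and.1 h))

variable {R} in
theorem homogeneousComponent_mem_jacobianSpan {f : MvPolynomial (Fin 4) R}
    (hf : f ∈ Ideal.span {X 0 * pderiv 0 (quintic R), pderiv 1 (quintic R), pderiv 2 (quintic R),
      X 3 * pderiv 3 (quintic R)}) :
    homogeneousComponent 8 f ∈ jacobianSpan R := by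
  refine homogeneousComponent_mem_of_mem_span (fun g hg => ?_) hf
  have hgen : ∃ i : Fin 6, i < 4 ∧ generator R i = g := by
    rcases hg with rfl | rfl | rfl | rfl
    exacts [⟨0, by decide, rfl⟩, ⟨1, by decide, rfl⟩, ⟨2, by decide, rfl⟩, ⟨3, by decide, rfl⟩]
  obtain ⟨i, hi, rfl⟩ := hgen
  exact ⟨_, isHomogeneous_generator R i, fun s => monomial_mul_generator_mem_jacobianSpan hi⟩

theorem mem_liftingIndices {i : Fin 6} {s : Fin 4 →₀ ℕ} (hs : s.degree = 3)
    (h : i = 4 ∧ 0 < s 0 + s 2 + s 3 ∨ i = 5 ∧ 0 < s 0 + s 3) : (i, ⇑s) ∈ liftingIndices := by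
  rcases h with ⟨rfl, h⟩ | ⟨rfl, h⟩ <;>
    simpa [liftingIndices, coe_mem_antidiagonalTuple, hs] using h

variable {R} in
theorem homogeneousComponent_mem_liftingSpan {f : MvPolynomial (Fin 4) R}
    (hf : f ∈ Ideal.span {X 2 ^ 3 * X 0 * X 3 * cubic R, X 1 * X 2 ^ 2 * X 0 * X 3 * cubic R,
      X 1 ^ 2 * X 2 * X 0 * X 3 * cubic R, X 0 ^ 2 * X 3 * cubic R, X 0 * X 3 ^ 2 * cubic R,
      X 1 ^ 2 * X 2 ^ 3 * X 0, X 1 ^ 2 * X 2 ^ 3 * X 3}) :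
    homogeneousComponent 8 f ∈ liftingSpan R := by
  refine homogeneousComponent_mem_of_mem_span (fun g hg => ?_) hf
  have hgen : ∃ i e, multiple R (i, e) = g ∧
      (i = 4 ∧ 0 < e 0 + e 2 + e 3 ∨ i = 5 ∧ 0 < e 0 + e 3) := by
    rcases hg with rfl | rfl | rfl | rfl | rfl | rfl | rfl
    exacts [⟨4, ![0, 0, 3, 0], by simp [multiple_eq, generator]; ring, by decide⟩,
      ⟨4, ![0, 1, 2, 0], by simp [multiple_eq, generator]; ring, by decide⟩,
      ⟨4, ![0, 2, 1, 0], by simp [multiple_eq, generator]; ring, by decide⟩,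
      ⟨4, ![1, 0, 0, 0], by simp [multiple_eq, generator]; ring, by decide⟩,
      ⟨4, ![0, 0, 0, 1], by simp [multiple_eq, generator]; ring, by decide⟩,
      ⟨5, ![1, 0, 0, 0], by simp [multiple_eq, generator]; ring, by decide⟩,
      ⟨5, ![0, 0, 0, 1], by simp [multiple_eq, generator]; ring, by decide⟩]
  obtain ⟨i, e, rfl, hie⟩ := hgen
  have hdeg : generatorDegree i = 5 := by
    rcases hie with ⟨rfl, -⟩ | ⟨rfl, -⟩ <;> rfl
  refine ⟨_, (isHomogeneous_monomial _ rfl).mul (isHomogeneous_generator R i), fun s hs => ?_⟩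
  dsimp only at hs
  rw [multiple, ← mul_assoc, monomial_mul, one_mul]
  refine monomial_mul_generator_mem_span (mem_liftingIndices ?_ ?_)
  · dsimp only
    rw [map_add]
    omega
  · simp only [Finsupp.add_apply, Finsupp.equivFunOnFinite_symm_apply_apply]
    omega

end QuinticSurface

open QuinticSurface in
theorem ideal_intersection_no_low_degree_general {R : Type*} [CommRing R] [IsAddTorsionFree R]
    (K F : MvPolynomial (Fin 4) R)
    (hK : K = X 0 ^ 2 * X 1 + X 0 * X 1 * X 2 + X 0 * X 2 ^ 2 + X 2 ^ 3 + X 0 * X 1 * X 3)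
    (hF : F = X 0 ^ 5 + X 1 * X 2 ^ 4 + X 2 * X 1 ^ 4 + X 3 ^ 5 + X 1 ^ 2 * X 2 ^ 3
      + X 0 * X 3 * K)
    (I J : Ideal (MvPolynomial (Fin 4) R))
    (hI : I = Ideal.span {X 0 * pderiv 0 F, pderiv 1 F, pderiv 2 F, X 3 * pderiv 3 F})
    (hJ : J = Ideal.span {X 2 ^ 3 * X 0 * X 3 * K, X 1 * X 2 ^ 2 * X 0 * X 3 * K,
      X 1 ^ 2 * X 2 * X 0 * X 3 * K, X 0 ^ 2 * X 3 * K, X 0 * X 3 ^ 2 * K,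
      X 1 ^ 2 * X 2 ^ 3 * X 0, X 1 ^ 2 * X 2 ^ 3 * X 3}) :
    ∀ (p : MvPolynomial (Fin 4) R) (n : ℕ), n ≤ 8 → p.IsHomogeneous n →
      p ∈ I ⊓ J → p = 0 := by
  intro p n hn hp hpIJ
  obtain rfl : K = cubic R := hK
  obtain rfl : F = quintic R := hF
  have hmem : X 0 ^ (8 - n) * p ∈ I ⊓ J := Ideal.mul_mem_left _ _ hpIJ
  have hdeg : (X 0 ^ (8 - n) * p).IsHomogeneous 8 := by
    have h := ((isHomogeneous_X R (0 : Fin 4)).pow (8 - n)).mul hp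
    rwa [one_mul, Nat.sub_add_cancel hn] at h
  have hcomp : homogeneousComponent 8 (X 0 ^ (8 - n) * p) = X 0 ^ (8 - n) * p := by
    rw [homogeneousComponent_of_mem hdeg, if_pos rfl]
  have hzero : X 0 ^ (8 - n) * p = 0 := by
    rw [← hcomp]
    exact Submodule.disjoint_def.1 (disjoint_jacobianSpan_liftingSpan R) _
      (homogeneousComponent_mem_jacobianSpan (hI ▸ hmem.1))
      (homogeneousComponent_mem_liftingSpan (hJ ▸ hmem.2))
  exact (isRegular_X_pow (8 - n)).left.mul_left_eq_zero_iff.1 hzero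

/-- For the quintic `F = x0⁵ + x1x2⁴ + x2x1⁴ + x3⁵ + x1²x2³ + x0x3·K` with
`K = x0²x1 + x0x1x2 + x0x2² + x2³ + x0x1x3`, the ideals
`I = (x0·∂F/∂x0, ∂F/∂x1, ∂F/∂x2, x3·∂F/∂x3)` and
`J = (x2³x0x3K, x1x2²x0x3K, x1²x2x0x3K, x0²x3K, x0x3²K, x1²x2³x0, x1²x2³x3)`
satisfy: every homogeneous polynomial of total degree at most 8 in `I ∩ J` is zero. -/
theorem ideal_intersection_no_low_degree (K F : MvPolynomial (Fin 4) ℂ)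
    (hK : K = X 0 ^ 2 * X 1 + X 0 * X 1 * X 2 + X 0 * X 2 ^ 2 + X 2 ^ 3 + X 0 * X 1 * X 3)
    (hF : F = X 0 ^ 5 + X 1 * X 2 ^ 4 + X 2 * X 1 ^ 4 + X 3 ^ 5 + X 1 ^ 2 * X 2 ^ 3
      + X 0 * X 3 * K)
    (I J : Ideal (MvPolynomial (Fin 4) ℂ))
    (hI : I = Ideal.span {X 0 * pderiv 0 F, pderiv 1 F, pderiv 2 F, X 3 * pderiv 3 F})
    (hJ : J = Ideal.span {X 2 ^ 3 * X 0 * X 3 * K, X 1 * X 2 ^ 2 * X 0 * X 3 * K,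
      X 1 ^ 2 * X 2 * X 0 * X 3 * K, X 0 ^ 2 * X 3 * K, X 0 * X 3 ^ 2 * K,
      X 1 ^ 2 * X 2 ^ 3 * X 0, X 1 ^ 2 * X 2 ^ 3 * X 3}) :
    ∀ (p : MvPolynomial (Fin 4) ℂ) (n : ℕ), n ≤ 8 → p.IsHomogeneous n →
      p ∈ I ⊓ J → p = 0 :=
  ideal_intersection_no_low_degree_general K F hK hF I J hI hJ
end

section
/- Let a ∈ ℂ satisfy a² − a + 1 = 0. In ℂ[w,x,y,z] let K = w²x + wxy + wy² + y³ + wxz, f = w⁵ + z⁵ + xy⁴ + x⁴y + zw·K, P = (a+1)·y³ + a·(a+1)·x²y, and N = zw·K. Then the product N·P·K does not belong to the ideal of ℂ[w,x,y,z] generated by the four partial derivatives ∂f/∂w, ∂f/∂x, ∂f/∂y, ∂f/∂z. -/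
open MvPolynomial

/-!
Macaulay's inverse system: a linear functional on `R[w, x, y, z]` vanishes on an ideal as soon as
contraction by each generator kills it. The relations `∂f/∂w` and `∂f/∂z` rewrite `w ^ 4` and
`z ^ 4` into terms of lower degree in `w, z`, so a functional annihilating them is determined by its
values at the monomials with exponents of `w` and `z` below 4. Among those of degree 11 that also
annihilate `∂f/∂x` and `∂f/∂y`, one can be chosen to be zero at `w * z * K ^ 2 * x ^ 2 * y` and
nonzero at `w * z * K ^ 2 * y ^ 3`; it detects `N * P * K` when `P` has a nonzero `y ^ 3` term.
-/

section Contraction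

variable {σ R : Type*} [CommSemiring R]

/-- Macaulay's contraction action, for a fixed function `c` on exponent vectors (an element of the
inverse system): a polynomial `p` sends `c` to the function whose value at `m` is that of the
linear functional with values `c` on the monomial basis at `monomial m 1 * p`. -/
noncomputable def contract (c : (σ →₀ ℕ) → R) : MvPolynomial σ R →ₗ[R] (σ →₀ ℕ) → R :=
  (basisMonomials σ R).constr R fun n m => c (m + n)

theorem contract_monomial (c : (σ →₀ ℕ) → R) (n : σ →₀ ℕ) (r : R) (m : σ →₀ ℕ) :
    contract c (monomial n r) m = r * c (m + n) := by
  have h := (basisMonomials σ R).constr_basis R (fun n m => c (m + n)) n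
  rw [coe_basisMonomials] at h
  rw [← mul_one r, ← smul_eq_mul, ← smul_monomial, map_smul, contract, h, Pi.smul_apply,
    smul_eq_mul, smul_eq_mul, mul_one]

theorem contract_C (c : (σ →₀ ℕ) → R) (r : R) (m : σ →₀ ℕ) :
    contract c (C r) m = r * c m := by
  rw [C_apply, contract_monomial, add_zero]

theorem contract_ofNat (c : (σ →₀ ℕ) → R) (k : ℕ) [k.AtLeastTwo] (m : σ →₀ ℕ) :
    contract c ofNat(k) m = ofNat(k) * c m := by
  simpa only [map_ofNat] using contract_C c (OfNat.ofNat k) m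

theorem contract_mul (c : (σ →₀ ℕ) → R) (p q : MvPolynomial σ R) :
    contract c (p * q) = contract (contract c q) p := by
  induction p using MvPolynomial.induction_on' with
  | add p₁ p₂ h₁ h₂ => rw [add_mul, map_add, h₁, h₂, map_add]
  | monomial n r =>
    induction q using MvPolynomial.induction_on' with
    | add q₁ q₂ h₁ h₂ =>
      ext m
      rw [mul_add, map_add, h₁, h₂, Pi.add_apply]
      simp only [contract_monomial, map_add, Pi.add_apply, mul_add]
    | monomial n' r' =>
      ext m
      simp only [monomial_mul, contract_monomial, add_assoc, mul_assoc]

theorem contract_X_pow (c : (σ →₀ ℕ) → R) (i : σ) (k : ℕ) (m : σ →₀ ℕ) :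
    contract c (X i ^ k) m = c (m + Finsupp.single i k) := by
  rw [X_pow_eq_monomial, contract_monomial, one_mul]

theorem contract_X (c : (σ →₀ ℕ) → R) (i : σ) (m : σ →₀ ℕ) :
    contract c (X i) m = c (m + Finsupp.single i 1) := by
  simpa only [pow_one] using contract_X_pow c i 1 m

theorem contract_zero_left : contract (0 : (σ →₀ ℕ) → R) = 0 :=
  map_zero ((basisMonomials σ R).constr R)

/-- The ideal of polynomials contracting `c` to zero. -/
noncomputable def contractAnnihilator (c : (σ →₀ ℕ) → R) : Ideal (MvPolynomial σ R) where
  __ := LinearMap.ker (contract c)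
  smul_mem' p q hq := by
    change contract c (p * q) = 0
    rw [contract_mul, show contract c q = 0 from hq, contract_zero_left, LinearMap.zero_apply]

theorem notMem_span_of_contract_ne_zero {c : (σ →₀ ℕ) → R} {s : Set (MvPolynomial σ R)}
    {p : MvPolynomial σ R} (hs : ∀ g ∈ s, contract c g = 0) (hp : contract c p ≠ 0) :
    p ∉ Ideal.span s :=
  fun h => hp (Ideal.span_le (I := contractAnnihilator c).2 hs h)

end Contraction

section Quintic

variable (R : Type*) [CommRing R]

/-- The cubic form `K`, with `w = X 0`, `x = X 1`, `y = X 2`, `z = X 3`. -/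
noncomputable def cubicK : MvPolynomial (Fin 4) R :=
  X 0 ^ 2 * X 1 + X 0 * X 1 * X 2 + X 0 * X 2 ^ 2 + X 2 ^ 3 + X 0 * X 1 * X 3

/-- The quintic form `f` defining the surface. -/
noncomputable def quintic : MvPolynomial (Fin 4) R :=
  X 0 ^ 5 + X 3 ^ 5 + X 1 * X 2 ^ 4 + X 1 ^ 4 * X 2 + X 3 * X 0 * cubicK R

theorem pderiv_w_quintic : pderiv 0 (quintic R) =
    5 * X 0 ^ 4 + X 3 * (3 * X 0 ^ 2 * X 1 + 2 * X 0 * X 1 * X 2 + 2 * X 0 * X 2 ^ 2 + X 2 ^ 3 +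
      2 * X 0 * X 1 * X 3) := by
  simp only [quintic, cubicK, map_add, pderiv_mul, pderiv_pow, pderiv_X, Pi.single_apply,
    Fin.reduceEq, if_true, if_false]
  push_cast
  ring

theorem pderiv_x_quintic : pderiv 1 (quintic R) =
    X 2 ^ 4 + 4 * X 1 ^ 3 * X 2 + X 3 * X 0 * (X 0 ^ 2 + X 0 * X 2 + X 0 * X 3) := by
  simp only [quintic, cubicK, map_add, pderiv_mul, pderiv_pow, pderiv_X, Pi.single_apply,
    Fin.reduceEq, if_true, if_false]
  push_cast
  ring

theorem pderiv_y_quintic : pderiv 2 (quintic R) =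
    4 * X 1 * X 2 ^ 3 + X 1 ^ 4 + X 3 * X 0 * (X 0 * X 1 + 2 * X 0 * X 2 + 3 * X 2 ^ 2) := by
  simp only [quintic, cubicK, map_add, pderiv_mul, pderiv_pow, pderiv_X, Pi.single_apply,
    Fin.reduceEq, if_true, if_false]
  push_cast
  ring

theorem pderiv_z_quintic : pderiv 3 (quintic R) =
    5 * X 3 ^ 4 + X 0 * (X 0 ^ 2 * X 1 + X 0 * X 1 * X 2 + X 0 * X 2 ^ 2 + X 2 ^ 3 +
      2 * X 0 * X 1 * X 3) := by
  simp only [quintic, cubicK, map_add, pderiv_mul, pderiv_pow, pderiv_X, Pi.single_apply,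
    Fin.reduceEq, if_true, if_false]
  push_cast
  ring

end Quintic

/-- The values of the dual functional at the monomials `w ^ i * x ^ j * y ^ k * z ^ l` of degree 11
with `i, l < 4`, indexed by `i`, `l` and `j` in this order. They are an integral solution of the
linear system which says that the functional is zero at `w * z * K ^ 2 * x ^ 2 * y` and at the
multiples of `∂f/∂x` and `∂f/∂y`, multiples of `∂f/∂w` and `∂f/∂z` being taken care of by
`reducedCoeff`. -/
def reducedValues : List (List (List ℤ)) :=
  [[[96450317027870286063011856625219754, 56373194808424400467442381760787808,
     -33628221527078815758307428107385000, 3041653161936928742479857935752356,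
     -22806613008329484574127760539650846, 20195591912781386181305727963851548,
     -8705139615976469947684316325538132, 9405560190624913325617200628154314,
     -10533496012444184714987104432389942, 34653380400574250882541081208153054,
     19655028785930130651166839034614153, -74614450165225827383484901134336498],
    [-19138065402547446935449049005808270, 24656599125353710299660455774419814,
     -40008414541810486749759963581321264, 29942291703422742143234623831416148,
     -9553887473341020026552575573152986, 21062560841713723950794106426471594,
     -17311980106054615385770568091377798, 7701416129109479678581680290607014,
     -15782741141827363175847459656833064, 96779216989575913865460853075712861,
     95662112501048028994235026275478542],
    [38982760449031520099113475327158138, 14145841121568045783752506014379986,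
     517859038431738187385100030394162, 6916290705675187273790881891711988,
     -11825513430739388830858039683353834, 2667694630879360550634782300847128,
     -7333495867391310747041627282801820, 23687154145111299557082783592106594,
     -1362877304209130041059206872563019, 105714028496777274512673969008019852],
    [-42929534060866258936794284957668732, -6904397894437781479621773972142570,
     1902544711342231168283558342776646, 7912809172951449037542397953261234,
     -1013413511445047975489261824477942, -981961779693920437206881025293826,
     -6013640703156921693815505062062094, 53272813838099097309564919976957153,
     60450760167956297924731748386197948]],
   [[62324020386368964866510031170793832, 79163096292592689085859710448648178,
     -25031683756270414960930971503089462, 12236236566529835072263087518706058,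
     -20505219389287184094126555651977396, 11485079221966507102389854568917096,
     -12699471702331193805086879393948942, 4764423965657766121693373385704868,
     -19479645004433341211213606232924444, 82159769682280998977271314799184675,
     286067284215115739397062547216893293],
    [-37760202138826759212174441866777410, 17908658991072067191472355624351228,
     -503736706909807982536205888872920, 23105271794986446876638362161765678,
     -13945388858522586444569967393894206, 4962146049999604462525911863483616,
     -13432646809240272052184215915128738, 22124630331985483914411263510793912,
     -12379351783437094059777494932086175, 186645296788446977609067959898146879],
    [-35564054943572086493903620173940508, 54254482043303734876396595725697538,
     -18040325704225280066452314297967964, 9793049816501679185822387159049440,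
     -22951527381672306850512990074534512, 1356802022088646450281259137003698,
     -13291454135595868741585903153380714, 59649034378090112262849457614292033,
     141085402860446772032153939361737305],
    [25874345867117074548979610957237192, -5569391580571496630255868791181674,
     -7464798379918813168438864300142784, -2037276107588059268036418069539000,
     -1680514153863410543330934784567806, 7261220547794736883629679452327688,
     -15383262200603247106541149472605685, 107815671960545216883560111485481969]],
   [[-17135385612594638169341956931635200, 52744543852719484851521499139494726,
     -1654049124911807437249643690494464, 9305671083119570410634244469023052,
     -19283647230452627857445622367442670, 2943952008204915338080959158036054,
     -7738544874435469930952766556769762, 14140427697253490500169800434220448,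
     -70587376919382263113143369858933743, -16064983902427204850302657453838048],
    [-61850822553662169787338399236615146, 34296085298436499915558357570062136,
     -8000853374555324553609797547489504, 14051443838068828032593097344126476,
     -15597811218403971724207439643100916, 2782917373694342771888974044868200,
     -20285094834055870023159499586187774, 23590860547402772249236005370530353,
     3192822124240570001727517590453824],
    [8417590698089803835213462256475792, 784474406462830639194688484343670,
     -25361297617308642859333416246966492, 2386385639656772730855848153550082,
     -3637786964563982591550235782243554, 7662653849117353107310475739037332,
     -46927010329858097887843309599287427, 7260606049017854291882581220810398],
    [-66479074218138718502181229579071846, 10577259779393419053271641912266006,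
     -9185475601678661515950859873410766, 20433679387804324189096412363203752,
     -11140630874998214807734195376481762, 18014902992278349083981272775841449,
     -134193512655152940343359043785478534]],
   [[-13047861954456135825965776806472772, 10913545230606852359385936110837390,
     -4836682641376204602960991812030882, 3487700231974151109901049238027772,
     -7343786750053573089393913975541168, 5007796157531747151924474800468772,
     -18034712108178619395544393618771390, 9465788551916323007408743821646215,
     -184736106494752155586246327611306631],
    [-55183697820045635080806351388089824, -227302480005792725684385656590230,
     -13791995132182761553972269953565196, 15341075824243350284808461868723614,
     4419970428797785587416633452378060, 11492820914183656799443239981802688,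
     -62696276822406565671477199321598883, -118877141930766062471403143357951677],
    [-42569617891094606970521678997260268, 2197216582154120114083516121582454,
     -9695055606057104678132186004187854, 16485563693334622479895388017341210,
     -6473359203534701288489714430549754, 16390846884200026561303983685981881,
     -188684364867238001844870490826707685],
    [-7636868285645317135637960398231556, 20644558434164157122746216705423010,
     -2216395411696097589779361092775880, 6108472498017331725707656322967012,
     -41360908010848520879502047051699265, -30368902302109671651072295676908281]]]

/-- The value of the dual functional at the monomial of degree 11 with exponents `i`, `j`, `l` of
`w`, `x`, `z`, the exponent of `y` being understood: `∂f/∂w` and `∂f/∂z` are used to rewrite `w ^ 4`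
and `z ^ 4` until `reducedValues` applies. Every rewriting lowers `i + l`, so `fuel` is only there
to make the recursion structural, and the divisions by 5 are exact for the chosen values. -/
def reducedCoeff (fuel i j l : ℕ) : ℤ :=
  match fuel, i, l with
  | n + 1, i + 4, l =>
    -(3 * reducedCoeff n (i + 2) (j + 1) (l + 1) + 2 * reducedCoeff n (i + 1) (j + 1) (l + 1) +
      2 * reducedCoeff n (i + 1) j (l + 1) + reducedCoeff n i j (l + 1) +
      2 * reducedCoeff n (i + 1) (j + 1) (l + 2)) / 5
  | n + 1, i, l + 4 =>
    -(reducedCoeff n (i + 3) (j + 1) l + reducedCoeff n (i + 2) (j + 1) l +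
      reducedCoeff n (i + 2) j l + reducedCoeff n (i + 1) j l +
      2 * reducedCoeff n (i + 2) (j + 1) (l + 1)) / 5
  | _, i, l => ((reducedValues.getD i []).getD l []).getD j 0

/-- The value of the dual functional at `w ^ i * x ^ j * y ^ k * z ^ l`, extended by zero to degrees
other than 11. -/
def dualCoeff (i j k l : ℕ) : ℤ :=
  if i + j + k + l = 11 then reducedCoeff 12 i j l else 0

theorem dualCoeff_eq_zero {i j k l : ℕ} (h : i + j + k + l ≠ 11) : dualCoeff i j k l = 0 :=
  if_neg h

theorem forall_of_degree_eq_seven {P : ℕ → ℕ → ℕ → ℕ → Prop}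
    (h : ∀ i < 8, ∀ j < 8 - i, ∀ k < 8 - i - j, P i j k (7 - i - j - k)) {i j k l : ℕ}
    (hd : i + j + k + l = 7) : P i j k l := by
  obtain rfl : l = 7 - i - j - k := by omega
  exact h i (by omega) j (by omega) k (by omega)

theorem dualCoeff_pderiv_w (i j k l : ℕ) :
    5 * dualCoeff (i + 4) j k l + 3 * dualCoeff (i + 2) (j + 1) k (l + 1) +
      2 * dualCoeff (i + 1) (j + 1) (k + 1) (l + 1) + 2 * dualCoeff (i + 1) j (k + 2) (l + 1) +
      dualCoeff i j (k + 3) (l + 1) + 2 * dualCoeff (i + 1) (j + 1) k (l + 2) = 0 := by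
  by_cases hd : i + j + k + l = 7
  · revert hd
    apply forall_of_degree_eq_seven
    decide +kernel
  · simp (disch := omega) only [dualCoeff_eq_zero, mul_zero, add_zero]

theorem dualCoeff_pderiv_x (i j k l : ℕ) :
    dualCoeff i j (k + 4) l + 4 * dualCoeff i (j + 3) (k + 1) l +
      dualCoeff (i + 3) j k (l + 1) + dualCoeff (i + 2) j (k + 1) (l + 1) +
      dualCoeff (i + 2) j k (l + 2) = 0 := by
  by_cases hd : i + j + k + l = 7
  · revert hd
    apply forall_of_degree_eq_seven
    decide +kernel
  · simp (disch := omega) only [dualCoeff_eq_zero, mul_zero, add_zero]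

theorem dualCoeff_pderiv_y (i j k l : ℕ) :
    4 * dualCoeff i (j + 1) (k + 3) l + dualCoeff i (j + 4) k l +
      dualCoeff (i + 2) (j + 1) k (l + 1) + 2 * dualCoeff (i + 2) j (k + 1) (l + 1) +
      3 * dualCoeff (i + 1) j (k + 2) (l + 1) = 0 := by
  by_cases hd : i + j + k + l = 7
  · revert hd
    apply forall_of_degree_eq_seven
    decide +kernel
  · simp (disch := omega) only [dualCoeff_eq_zero, mul_zero, add_zero]

theorem dualCoeff_pderiv_z (i j k l : ℕ) :
    5 * dualCoeff i j k (l + 4) + dualCoeff (i + 3) (j + 1) k l +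
      dualCoeff (i + 2) (j + 1) (k + 1) l + dualCoeff (i + 2) j (k + 2) l +
      dualCoeff (i + 1) j (k + 3) l + 2 * dualCoeff (i + 2) (j + 1) k (l + 1) = 0 := by
  by_cases hd : i + j + k + l = 7
  · revert hd
    apply forall_of_degree_eq_seven
    decide +kernel
  · simp (disch := omega) only [dualCoeff_eq_zero, mul_zero, add_zero]

section DualForm

variable (R : Type*) [CommRing R]

/-- The element of the inverse system in four variables whose value at the exponent vector
`(i, j, k, l)` is `c i j k l`. -/
def ofCoeff (c : ℕ → ℕ → ℕ → ℕ → ℤ) (m : Fin 4 →₀ ℕ) : R := c (m 0) (m 1) (m 2) (m 3)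

theorem contract_pderiv_w_quintic :
    contract (ofCoeff R dualCoeff) (pderiv 0 (quintic R)) = 0 := by
  ext m
  simpa [pderiv_w_quintic, mul_add, mul_assoc, ← add_assoc, contract_mul, contract_ofNat,
    contract_X, contract_X_pow, ofCoeff] using
    congrArg (Int.cast : ℤ → R) (dualCoeff_pderiv_w (m 0) (m 1) (m 2) (m 3))

theorem contract_pderiv_x_quintic :
    contract (ofCoeff R dualCoeff) (pderiv 1 (quintic R)) = 0 := by
  ext m
  simpa [pderiv_x_quintic, mul_add, mul_assoc, ← add_assoc, contract_mul, contract_ofNat,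
    contract_X, contract_X_pow, ofCoeff] using
    congrArg (Int.cast : ℤ → R) (dualCoeff_pderiv_x (m 0) (m 1) (m 2) (m 3))

theorem contract_pderiv_y_quintic :
    contract (ofCoeff R dualCoeff) (pderiv 2 (quintic R)) = 0 := by
  ext m
  simpa [pderiv_y_quintic, mul_add, mul_assoc, ← add_assoc, contract_mul, contract_ofNat,
    contract_X, contract_X_pow, ofCoeff] using
    congrArg (Int.cast : ℤ → R) (dualCoeff_pderiv_y (m 0) (m 1) (m 2) (m 3))

theorem contract_pderiv_z_quintic :
    contract (ofCoeff R dualCoeff) (pderiv 3 (quintic R)) = 0 := by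
  ext m
  simpa [pderiv_z_quintic, mul_add, mul_assoc, ← add_assoc, contract_mul, contract_ofNat,
    contract_X, contract_X_pow, ofCoeff] using
    congrArg (Int.cast : ℤ → R) (dualCoeff_pderiv_z (m 0) (m 1) (m 2) (m 3))

/-- Contraction by `K` on the values of an element of the inverse system. -/
def actK (c : ℕ → ℕ → ℕ → ℕ → ℤ) (i j k l : ℕ) : ℤ :=
  c (i + 2) (j + 1) k l + c (i + 1) (j + 1) (k + 1) l + c (i + 1) j (k + 2) l +
    c i j (k + 3) l + c (i + 1) (j + 1) k (l + 1)

theorem contract_ofCoeff_cubicK (c : ℕ → ℕ → ℕ → ℕ → ℤ) :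
    contract (ofCoeff R c) (cubicK R) = ofCoeff R (actK c) := by
  ext m
  simp [cubicK, actK, mul_assoc, contract_mul, contract_X, contract_X_pow, ofCoeff]

theorem actK_actK_dualCoeff_zwy3_ne_zero : actK (actK dualCoeff) 1 0 3 1 ≠ 0 := by
  decide +kernel

theorem actK_actK_dualCoeff_zwx2y : actK (actK dualCoeff) 1 2 1 1 = 0 := by
  decide +kernel

theorem contract_NPK (α β : R) : contract (ofCoeff R dualCoeff)
    (X 3 * X 0 * cubicK R * (C α * X 2 ^ 3 + C β * X 1 ^ 2 * X 2) * cubicK R) 0 =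
      α * actK (actK dualCoeff) 1 0 3 1 := by
  have hcomm : X 3 * X 0 * cubicK R * (C α * X 2 ^ 3 + C β * X 1 ^ 2 * X 2) * cubicK R =
    X 3 * X 0 * (C α * X 2 ^ 3 + C β * X 1 ^ 2 * X 2) * cubicK R * cubicK R := by ring
  have hmixed := actK_actK_dualCoeff_zwx2y
  rw [hcomm, contract_mul, contract_ofCoeff_cubicK, contract_mul, contract_ofCoeff_cubicK]
  simp [mul_add, mul_assoc, contract_mul, contract_C, contract_X, contract_X_pow, ofCoeff, hmixed]

end DualForm

theorem NPK_not_in_jacobian_ideal_general {R : Type*} [CommRing R] [NoZeroDivisors R] [CharZero R]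
    {α : R} (hα : α ≠ 0) (β : R) :
    X 3 * X 0 * cubicK R * (C α * X 2 ^ 3 + C β * X 1 ^ 2 * X 2) * cubicK R ∉
      Ideal.span {pderiv 0 (quintic R), pderiv 1 (quintic R), pderiv 2 (quintic R),
        pderiv 3 (quintic R)} := by
  apply notMem_span_of_contract_ne_zero (c := ofCoeff R dualCoeff)
  · rintro g (rfl | rfl | rfl | rfl)
    exacts [contract_pderiv_w_quintic R, contract_pderiv_x_quintic R,
      contract_pderiv_y_quintic R, contract_pderiv_z_quintic R]
  · refine fun h => mul_ne_zero hα (Int.cast_ne_zero.2 actK_actK_dualCoeff_zwy3_ne_zero) ?_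
    rw [← contract_NPK R α β, h, Pi.zero_apply]

/-- With `w = X 0`, `x = X 1`, `y = X 2`, `z = X 3`: if `a² − a + 1 = 0`,
`K = w²x + wxy + wy² + y³ + wxz`, `f = w⁵ + z⁵ + xy⁴ + x⁴y + zw·K`,
`P = (a+1)y³ + a(a+1)x²y` and `N = zw·K`, then `N·P·K` is not in the Jacobian ideal
of `f`. -/
theorem NPK_not_in_jacobian_ideal (a : ℂ) (ha : a ^ 2 - a + 1 = 0)
    (K f P N : MvPolynomial (Fin 4) ℂ)
    (hK : K = X 0 ^ 2 * X 1 + X 0 * X 1 * X 2 + X 0 * X 2 ^ 2 + X 2 ^ 3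
      + X 0 * X 1 * X 3)
    (hf : f = X 0 ^ 5 + X 3 ^ 5 + X 1 * X 2 ^ 4 + X 1 ^ 4 * X 2 + X 3 * X 0 * K)
    (hP : P = C (a + 1) * X 2 ^ 3 + C (a * (a + 1)) * X 1 ^ 2 * X 2)
    (hN : N = X 3 * X 0 * K) :
    N * P * K ∉ Ideal.span {pderiv 0 f, pderiv 1 f, pderiv 2 f, pderiv 3 f} := by
  subst hN hP hf hK
  have ha' : a + 1 ≠ 0 := fun h => three_ne_zero (α := ℂ) (by linear_combination ha - (a - 2) * h)
  exact NPK_not_in_jacobian_ideal_general ha' (a * (a + 1))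
end
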